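/- Let C be a compact strictly convex planar body whose boundary is traced by a C^∞, λ-periodic, affinely parametrized curve x with affine curvature k. For each n ≥ 3, let 0 ≤ s_{n,1} < … < s_{n,n} < λ be parameters of the vertices of a best approximating inscribed polygon with at most n vertices, indices extended cyclically by s_{n,i+n} = s_{n,i} + λ, and set λ_{n,i} := s_{n,i} − s_{n,i−1}. Then λ_{n,i+1} = λ_{n,i} + (1/30)·k'(s_{n,i})·λ_{n,i}⁴ + ε₁(n,i), where lim_{n→∞} max_{1 ≤ i ≤ n} |ε₁(n,i)| / λ_{n,i}⁵ = 0. -/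

import Mathlib

open Filter MeasureTheory
open scoped Topology

/-- The standard area form on the plane: `ω(u,v) = u₁v₂ − u₂v₁`. -/
noncomputable def om (u v : ℝ × ℝ) : ℝ := u.1 * v.2 - u.2 * v.1

/-!
Moving a single vertex `x (s i)` of a polygon of maximal area only changes the area of the triangle
it spans with its two neighbours, so this area is stationary: the neighbours are equally far from
the tangent line at `x (s i)`. With `G h = ω(x'(s i), x (s i + h) - x (s i))` this says
`G b = G (-a)` for the two gaps `a` and `b` adjacent to the vertex. Since
`G h = h ^ 2 / 2 - k h ^ 4 / 24 - k' h ^ 5 / 60 + O(h ^ 6)` with `k`, `k'` taken at `s i`, the left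
side of `G b - G a = G (-a) - G a` is about `a (b - a)` and the right side about `k' a ^ 5 / 30`,
which gives the recursion as soon as the gaps are small. They are: some gap is at most `λ / n`, and
by the recursion itself the size of the gap cannot double within `n` steps.
-/

section AreaForm

lemma om_self (u : ℝ × ℝ) : om u u = 0 := by
  unfold om; ring

lemma om_sub_right (u v w : ℝ × ℝ) : om u (v - w) = om u v - om u w := by
  simp only [om, Prod.fst_sub, Prod.snd_sub]; ring

lemma eq_om_smul_add_om_smul {u v : ℝ × ℝ} (huv : om u v = 1) (w : ℝ × ℝ) :
    w = om w v • u + om u w • v := by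
  unfold om at *
  ext
  · simp only [Prod.fst_add, Prod.smul_fst, smul_eq_mul]
    linear_combination -w.1 * huv
  · simp only [Prod.snd_add, Prod.smul_snd, smul_eq_mul]
    linear_combination -w.2 * huv

lemma abs_om_le (u v : ℝ × ℝ) : |om u v| ≤ 2 * (‖u‖ * ‖v‖) := by
  have h₁ : |u.1 * v.2| ≤ ‖u‖ * ‖v‖ := by
    rw [abs_mul]
    exact mul_le_mul (norm_fst_le u) (norm_snd_le v) (abs_nonneg _) (norm_nonneg _)
  have h₂ : |u.2 * v.1| ≤ ‖u‖ * ‖v‖ := by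
    rw [abs_mul]
    exact mul_le_mul (norm_snd_le u) (norm_fst_le v) (abs_nonneg _) (norm_nonneg _)
  have h : om u v = u.1 * v.2 - u.2 * v.1 := by unfold om; ring
  rw [h]
  linarith [abs_sub (u.1 * v.2) (u.2 * v.1)]

lemma continuous_om {X : Type*} [TopologicalSpace X] {u v : X → ℝ × ℝ} (hu : Continuous u)
    (hv : Continuous v) : Continuous fun p => om (u p) (v p) := by
  unfold om
  fun_prop

lemma hasDerivAt_om {u v : ℝ → ℝ × ℝ} {u' v' : ℝ × ℝ} {t : ℝ} (hu : HasDerivAt u u' t)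
    (hv : HasDerivAt v v' t) :
    HasDerivAt (fun t => om (u t) (v t)) (om u' (v t) + om (u t) v') t := by
  have hu₁ : HasDerivAt (fun t => (u t).1) u'.1 t := hu.fst
  have hu₂ : HasDerivAt (fun t => (u t).2) u'.2 t := hu.snd
  have hv₁ : HasDerivAt (fun t => (v t).1) v'.1 t := hv.fst
  have hv₂ : HasDerivAt (fun t => (v t).2) v'.2 t := hv.snd
  exact ((hu₁.mul hv₂).sub (hu₂.mul hv₁)).congr_deriv (by unfold om; ring)

end AreaForm

section Taylor

lemma hasDerivAt_iteratedDeriv {E : Type*} [NormedAddCommGroup E] [NormedSpace ℝ E] {f : ℝ → E}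
    {n : WithTop ℕ∞} {j : ℕ} (hf : ContDiff ℝ n f) (hj : j < n) (t : ℝ) :
    HasDerivAt (iteratedDeriv j f) (iteratedDeriv (j + 1) f t) t := by
  rw [iteratedDeriv_succ]
  exact (hf.differentiable_iteratedDeriv j hj t).hasDerivAt

lemma exists_eq_sum_add_iteratedDeriv {f : ℝ → ℝ} {n : ℕ} (hf : ContDiff ℝ (n + 1) f) {a : ℝ}
    (ha : a ≠ 0) :
    ∃ ξ, |ξ| ≤ |a| ∧ f a = ∑ j ∈ Finset.range (n + 1), iteratedDeriv j f 0 * a ^ j / j.factorial +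
      iteratedDeriv (n + 1) f ξ * a ^ (n + 1) / (n + 1).factorial := by
  obtain ⟨ξ, hξ, h⟩ := taylor_mean_remainder_lagrange_iteratedDeriv ha.symm hf.contDiffOn
  refine ⟨ξ, by simpa using Set.abs_sub_left_of_mem_uIcc (Set.uIoo_subset_uIcc_self hξ), ?_⟩
  rw [sub_zero, sub_eq_iff_eq_add'] at h
  rw [h, taylor_within_apply]
  congr 1
  refine Finset.sum_congr rfl fun j hj => ?_
  rw [iteratedDerivWithin_eq_iteratedDeriv (uniqueDiffOn_uIcc ha.symm)
    (hf.contDiffAt.of_le (by exact_mod_cast (Finset.mem_range.1 hj).le)) Set.left_mem_uIcc]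
  simp only [sub_zero, smul_eq_mul]
  ring

end Taylor

section Periodic

variable {T : ℝ}

lemma exists_forall_norm_le_of_periodic {E : Type*} [NormedAddCommGroup E] {f : ℝ → E}
    (hT : T ≠ 0) (hf : Continuous f) (hper : Function.Periodic f T) :
    ∃ K > 0, ∀ t, ‖f t‖ ≤ K := by
  obtain ⟨K, hK, h⟩ := (hper.isBounded_of_continuous hT hf).exists_pos_norm_le
  exact ⟨K, hK, fun t => h _ ⟨t, rfl⟩⟩

lemma exists_forall_abs_lt_of_periodic {F : ℝ → ℝ → ℝ} (hT : 0 < T)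
    (hF : Continuous fun p : ℝ × ℝ => F p.1 p.2) (hper : ∀ h, Function.Periodic (F · h) T)
    (h0 : ∀ s, F s 0 = 0) {ε : ℝ} (hε : 0 < ε) :
    ∃ δ > 0, ∀ s h, |h| < δ → |F s h| < ε := by
  have hnear : ∀ᶠ h in 𝓝 (0 : ℝ), ∀ s ∈ Set.Icc 0 T, |F s h| < ε := by
    refine isCompact_Icc.eventually_forall_of_forall_eventually fun s _ => ?_
    exact (hF.comp continuous_swap).abs.continuousAt.eventually_lt_const (by simpa [h0] using hε)
  obtain ⟨δ, hδ, h⟩ := Metric.eventually_nhds_iff.1 hnear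
  refine ⟨δ, hδ, fun s t ht => ?_⟩
  obtain ⟨u, hu, hsu⟩ := (hper t).exists_mem_Ico₀ hT s
  rw [hsu]
  exact h (by simpa using ht) u (Set.Ico_subset_Icc_self hu)

lemma periodic_iteratedDeriv {E : Type*} [NormedAddCommGroup E] [NormedSpace ℝ E] {f : ℝ → E}
    (hf : Function.Periodic f T) (j : ℕ) : Function.Periodic (iteratedDeriv j f) T := fun t => by
  rw [← congrFun (iteratedDeriv_comp_add_const j f T) t, hf.funext]

end Periodic

section CurveCalculus

variable {x : ℝ → ℝ × ℝ} {lam : ℝ}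

/-- The curve `x` is parametrized by affine arc length: `ω(x', x'') = 1`. -/
def IsAffineArcLength (x : ℝ → ℝ × ℝ) : Prop :=
  ∀ t, om (deriv x t) (iteratedDeriv 2 x t) = 1

/-- The affine curvature `ω(x'', x''')` of a curve parametrized by affine arc length. -/
noncomputable def affineCurvature (x : ℝ → ℝ × ℝ) (t : ℝ) : ℝ :=
  om (iteratedDeriv 2 x t) (iteratedDeriv 3 x t)

/-- The height of the point `x (s + h)` above the tangent line at `x s`, measured by
`ω(x' s, ·)`. -/
noncomputable def tangentHeight (x : ℝ → ℝ × ℝ) (s h : ℝ) : ℝ :=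
  om (deriv x s) (x (s + h) - x s)

lemma hasDerivAt_om_iteratedDeriv {n : WithTop ℕ∞} (hx : ContDiff ℝ n x) {i j : ℕ} (hi : i < n)
    (hj : j < n) (t : ℝ) :
    HasDerivAt (fun t => om (iteratedDeriv i x t) (iteratedDeriv j x t))
      (om (iteratedDeriv (i + 1) x t) (iteratedDeriv j x t) +
        om (iteratedDeriv i x t) (iteratedDeriv (j + 1) x t)) t :=
  hasDerivAt_om (hasDerivAt_iteratedDeriv hx hi t) (hasDerivAt_iteratedDeriv hx hj t)

namespace IsAffineArcLength

lemma om_deriv_iteratedDeriv_three (haff : IsAffineArcLength x) (hx : ContDiff ℝ 3 x) (t : ℝ) :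
    om (deriv x t) (iteratedDeriv 3 x t) = 0 := by
  have h := hasDerivAt_om_iteratedDeriv hx (i := 1) (j := 2) (by norm_num) (by norm_num) t
  simp only [iteratedDeriv_one, funext haff, om_self, zero_add] at h
  exact h.unique (hasDerivAt_const t 1)

lemma om_deriv_iteratedDeriv_four (haff : IsAffineArcLength x) (hx : ContDiff ℝ 4 x) (t : ℝ) :
    om (deriv x t) (iteratedDeriv 4 x t) = -affineCurvature x t := by
  have h := hasDerivAt_om_iteratedDeriv hx (i := 1) (j := 3) (by norm_num) (by norm_num) t
  simp only [iteratedDeriv_one,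
    funext (haff.om_deriv_iteratedDeriv_three (hx.of_le (by norm_num)))] at h
  exact eq_neg_of_add_eq_zero_right (h.unique (hasDerivAt_const t 0))

end IsAffineArcLength

lemma hasDerivAt_affineCurvature (hx : ContDiff ℝ 4 x) (t : ℝ) :
    HasDerivAt (affineCurvature x) (om (iteratedDeriv 2 x t) (iteratedDeriv 4 x t)) t :=
  (hasDerivAt_om_iteratedDeriv hx (i := 2) (j := 3) (by norm_num) (by norm_num) t).congr_deriv
    (by rw [om_self, zero_add])

lemma IsAffineArcLength.om_deriv_iteratedDeriv_five (haff : IsAffineArcLength x)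
    (hx : ContDiff ℝ 5 x) (t : ℝ) :
    om (deriv x t) (iteratedDeriv 5 x t) = -2 * deriv (affineCurvature x) t := by
  have hx₄ : ContDiff ℝ 4 x := hx.of_le (by norm_num)
  have hk := hasDerivAt_affineCurvature hx₄ t
  have h := hasDerivAt_om_iteratedDeriv hx (i := 1) (j := 4) (by norm_num) (by norm_num) t
  simp only [iteratedDeriv_one, funext (haff.om_deriv_iteratedDeriv_four hx₄)] at h
  have hsum := h.unique hk.neg
  rw [hk.deriv]
  linarith

lemma continuous_deriv_affineCurvature (hx : ContDiff ℝ 4 x) :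
    Continuous (deriv (affineCurvature x)) := by
  rw [funext fun t => (hasDerivAt_affineCurvature hx t).deriv]
  exact continuous_om (hx.continuous_iteratedDeriv 2 (by norm_num))
    (hx.continuous_iteratedDeriv 4 (by norm_num))

lemma periodic_affineCurvature (hper : Function.Periodic x lam) :
    Function.Periodic (affineCurvature x) lam := fun t => by
  simp only [affineCurvature, periodic_iteratedDeriv hper _ t]

lemma exists_abs_deriv_affineCurvature_le (hlam : lam ≠ 0) (hx : ContDiff ℝ 4 x)
    (hper : Function.Periodic x lam) : ∃ K > 0, ∀ s, |deriv (affineCurvature x) s| ≤ K := by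
  refine exists_forall_norm_le_of_periodic hlam (continuous_deriv_affineCurvature hx) fun s => ?_
  simpa only [iteratedDeriv_one] using periodic_iteratedDeriv (periodic_affineCurvature hper) 1 s

end CurveCalculus

section TangentHeight

variable {x : ℝ → ℝ × ℝ} {lam : ℝ}

lemma tangentHeight_zero (s : ℝ) : tangentHeight x s 0 = 0 := by
  simp [tangentHeight, om]

lemma tangentHeight_sub_tangentHeight (s h h' : ℝ) :
    tangentHeight x s h - tangentHeight x s h' = om (deriv x s) (x (s + h) - x (s + h')) := by
  simp only [tangentHeight, om_sub_right]
  ring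

lemma periodic_tangentHeight_left (hper : Function.Periodic x lam) (h : ℝ) :
    Function.Periodic (tangentHeight x · h) lam := fun s => by
  have hd : deriv x (s + lam) = deriv x s := by
    simpa only [iteratedDeriv_one] using periodic_iteratedDeriv hper 1 s
  simp only [tangentHeight, hd, hper s, add_right_comm s lam h, hper (s + h)]

lemma periodic_tangentHeight_right (hper : Function.Periodic x lam) (s : ℝ) :
    Function.Periodic (tangentHeight x s) lam := fun h => by
  simp only [tangentHeight, ← add_assoc, hper (s + h)]

lemma continuous_tangentHeight (hx : ContDiff ℝ 1 x) :
    Continuous fun p : ℝ × ℝ => tangentHeight x p.1 p.2 := by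
  have hsum : Continuous fun p : ℝ × ℝ => x (p.1 + p.2) := hx.continuous.comp continuous_add
  exact continuous_om ((hx.continuous_deriv le_rfl).comp continuous_fst)
    (hsum.sub (hx.continuous.comp continuous_fst))

lemma hasDerivAt_tangentHeight (hx : Differentiable ℝ x) (s h : ℝ) :
    HasDerivAt (tangentHeight x s) (om (deriv x s) (deriv x (s + h))) h := by
  have hv : HasDerivAt (fun h => x (s + h) - x s) (deriv x (s + h)) h :=
    ((hx (s + h)).hasDerivAt.comp_const_add s h).sub_const (x s)
  exact (hasDerivAt_om (hasDerivAt_const h (deriv x s)) hv).congr_deriv (by simp [om])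

lemma contDiff_tangentHeight {n : WithTop ℕ∞} (hx : ContDiff ℝ n x) (s : ℝ) :
    ContDiff ℝ n (tangentHeight x s) := by
  unfold tangentHeight om
  fun_prop

lemma iteratedDeriv_tangentHeight {j : ℕ} (hx : ContDiff ℝ (j + 1) x) (s : ℝ) :
    iteratedDeriv (j + 1) (tangentHeight x s) =
      fun h => om (deriv x s) (iteratedDeriv (j + 1) x (s + h)) := by
  induction j with
  | zero =>
    simp only [zero_add, iteratedDeriv_one]
    exact funext fun h =>
      (hasDerivAt_tangentHeight (hx.differentiable (by simp)) s h).deriv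
  | succ j ih =>
    rw [iteratedDeriv_succ, ih (hx.of_le (by simp))]
    refine funext fun h => HasDerivAt.deriv ?_
    have hv := (hasDerivAt_iteratedDeriv hx (j := j + 1) (by norm_cast; simp)
      (s + h)).comp_const_add s h
    exact (hasDerivAt_om (hasDerivAt_const h (deriv x s)) hv).congr_deriv (by simp [om])

end TangentHeight

section TangentHeightEstimates

variable {x : ℝ → ℝ × ℝ} {lam : ℝ}

lemma exists_forall_abs_om_iteratedDeriv_le (hlam : lam ≠ 0) {n : WithTop ℕ∞}
    (hx : ContDiff ℝ n x) (hper : Function.Periodic x lam) {i j : ℕ} (hi : i ≤ n) (hj : j ≤ n) :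
    ∃ M > 0, ∀ s t, |om (iteratedDeriv i x s) (iteratedDeriv j x t)| ≤ M := by
  obtain ⟨A, hA, hAx⟩ := exists_forall_norm_le_of_periodic hlam (hx.continuous_iteratedDeriv i hi)
    (periodic_iteratedDeriv hper i)
  obtain ⟨B, hB, hBx⟩ := exists_forall_norm_le_of_periodic hlam (hx.continuous_iteratedDeriv j hj)
    (periodic_iteratedDeriv hper j)
  refine ⟨2 * (A * B), by positivity, fun s t => (abs_om_le _ _).trans ?_⟩
  gcongr
  exacts [hAx s, hBx t]

lemma exists_abs_om_iteratedDeriv_sub_lt (hlam : 0 < lam) {n : WithTop ℕ∞} (hx : ContDiff ℝ n x)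
    (hper : Function.Periodic x lam) {i j : ℕ} (hi : i ≤ n) (hj : j ≤ n) {ε : ℝ} (hε : 0 < ε) :
    ∃ δ > 0, ∀ s h, |h| < δ →
      |om (iteratedDeriv i x s) (iteratedDeriv j x (s + h) - iteratedDeriv j x s)| < ε := by
  have hcont := hx.continuous_iteratedDeriv j hj
  have hdiff : Continuous fun p : ℝ × ℝ => iteratedDeriv j x (p.1 + p.2) - iteratedDeriv j x p.1 :=
    (hcont.comp continuous_add).sub (hcont.comp continuous_fst)
  refine exists_forall_abs_lt_of_periodic hlam
    (continuous_om ((hx.continuous_iteratedDeriv i hi).comp continuous_fst) hdiff)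
    (fun h s => ?_) (fun s => by simp [om]) hε
  simp only [periodic_iteratedDeriv hper _ s, add_right_comm s lam h,
    periodic_iteratedDeriv hper _ (s + h)]

lemma IsAffineArcLength.exists_abs_deriv_tangentHeight_sub_le (haff : IsAffineArcLength x)
    (hlam : lam ≠ 0) (hx : ContDiff ℝ 4 x) (hper : Function.Periodic x lam) :
    ∃ M > 0, ∀ s h, |om (deriv x s) (deriv x (s + h)) - h| ≤ M * |h| ^ 3 := by
  obtain ⟨M, hM, hMx⟩ := exists_forall_abs_om_iteratedDeriv_le hlam hx hper
    (i := 1) (j := 4) (by norm_num) le_rfl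
  refine ⟨M, hM, fun s h => ?_⟩
  rcases eq_or_ne h 0 with rfl | hh
  · simp [om_self]
  have hderiv : deriv (tangentHeight x s) = fun h => om (deriv x s) (deriv x (s + h)) :=
    funext fun h => (hasDerivAt_tangentHeight (hx.differentiable (by norm_num)) s h).deriv
  have hiter (j : ℕ) (hj : (j + 1 : WithTop ℕ∞) ≤ 4) :
      iteratedDeriv j (fun h => om (deriv x s) (deriv x (s + h))) =
        fun h => om (deriv x s) (iteratedDeriv (j + 1) x (s + h)) := by
    rw [← hderiv, ← iteratedDeriv_succ', iteratedDeriv_tangentHeight (hx.of_le hj)]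
  have hsmooth : ContDiff ℝ 3 fun h => om (deriv x s) (deriv x (s + h)) := by
    rw [← hderiv]
    exact (contDiff_tangentHeight hx s).deriv'
  obtain ⟨ξ, -, hξ⟩ := exists_eq_sum_add_iteratedDeriv (n := 2)
    (hsmooth.of_le (by norm_num)) hh
  have hexp : om (deriv x s) (deriv x (s + h)) - h =
      om (iteratedDeriv 1 x s) (iteratedDeriv 4 x (s + ξ)) / 6 * h ^ 3 := by
    rw [hξ, hiter (2 + 1) (by norm_num)]
    simp only [Finset.sum_range_succ, Finset.sum_range_zero]
    rw [hiter 0 (by norm_num), hiter 1 (by norm_num), hiter 2 (by norm_num)]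
    simp only [add_zero, zero_add, Nat.reduceAdd, iteratedDeriv_one, om_self, haff s,
      haff.om_deriv_iteratedDeriv_three (hx.of_le (by norm_num)), Nat.factorial]
    push_cast
    ring
  rw [hexp, abs_mul, abs_div, abs_pow]
  gcongr
  have := hMx s (s + ξ)
  rw [abs_of_pos (by norm_num : (0 : ℝ) < 6)]
  linarith [abs_nonneg (om (iteratedDeriv 1 x s) (iteratedDeriv 4 x (s + ξ)))]

lemma IsAffineArcLength.exists_tangentHeight_eq (haff : IsAffineArcLength x) (hx : ContDiff ℝ 6 x)
    (s : ℝ) {a : ℝ} (ha : a ≠ 0) :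
    ∃ ξ, |ξ| ≤ |a| ∧ tangentHeight x s a =
      a ^ 2 / 2 - affineCurvature x s * a ^ 4 / 24 - deriv (affineCurvature x) s * a ^ 5 / 60 +
        om (deriv x s) (iteratedDeriv 6 x (s + ξ)) * a ^ 6 / 720 := by
  obtain ⟨ξ, hξa, hξ⟩ := exists_eq_sum_add_iteratedDeriv (n := 5)
    ((contDiff_tangentHeight hx s).of_le (by norm_num)) ha
  refine ⟨ξ, hξa, ?_⟩
  rw [hξ, iteratedDeriv_tangentHeight (j := 5) (hx.of_le (by norm_num))]
  simp only [Finset.sum_range_succ, Finset.sum_range_zero, iteratedDeriv_zero]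
  rw [iteratedDeriv_tangentHeight (j := 0) (hx.of_le (by norm_num)),
    iteratedDeriv_tangentHeight (j := 1) (hx.of_le (by norm_num)),
    iteratedDeriv_tangentHeight (j := 2) (hx.of_le (by norm_num)),
    iteratedDeriv_tangentHeight (j := 3) (hx.of_le (by norm_num)),
    iteratedDeriv_tangentHeight (j := 4) (hx.of_le (by norm_num))]
  simp only [add_zero, zero_add, Nat.reduceAdd, iteratedDeriv_one, om_self, haff s,
    tangentHeight_zero, haff.om_deriv_iteratedDeriv_three (hx.of_le (by norm_num)),
    haff.om_deriv_iteratedDeriv_four (hx.of_le (by norm_num)),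
    haff.om_deriv_iteratedDeriv_five (hx.of_le (by norm_num)), Nat.factorial]
  push_cast
  ring

lemma IsAffineArcLength.exists_abs_tangentHeight_sub_neg_le (haff : IsAffineArcLength x)
    (hlam : 0 < lam) (hx : ContDiff ℝ 6 x) (hper : Function.Periodic x lam) {ε : ℝ} (hε : 0 < ε) :
    ∃ δ > 0, ∀ s a, 0 < a → a < δ →
      |tangentHeight x s (-a) - tangentHeight x s a - deriv (affineCurvature x) s * a ^ 5 / 30| ≤
        ε * a ^ 6 := by
  obtain ⟨δ, hδ, hδx⟩ := exists_abs_om_iteratedDeriv_sub_lt (i := 1) (j := 6) hlam hx hper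
    (by norm_num) le_rfl hε
  refine ⟨δ, hδ, fun s a ha haδ => ?_⟩
  obtain ⟨ξ, hξ, hGa⟩ := haff.exists_tangentHeight_eq hx s ha.ne'
  obtain ⟨ζ, hζ, hGna⟩ := haff.exists_tangentHeight_eq hx s (neg_ne_zero.2 ha.ne')
  rw [abs_of_pos ha] at hξ
  rw [abs_neg, abs_of_pos ha] at hζ
  have hξδ := hδx s ξ (hξ.trans_lt haδ)
  have hζδ := hδx s ζ (hζ.trans_lt haδ)
  simp only [om_sub_right, iteratedDeriv_one] at hξδ hζδ
  have hexp : tangentHeight x s (-a) - tangentHeight x s a -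
        deriv (affineCurvature x) s * a ^ 5 / 30 =
      (om (deriv x s) (iteratedDeriv 6 x (s + ζ)) - om (deriv x s) (iteratedDeriv 6 x (s + ξ))) /
        720 * a ^ 6 := by
    rw [hGa, hGna]
    ring
  rw [hexp, abs_mul, abs_of_pos (pow_pos ha 6)]
  gcongr
  rw [abs_lt] at hξδ hζδ
  rw [abs_le]
  constructor <;> linarith

lemma exists_pos_forall_le_tangentHeight (hlam : 0 < lam) (hx : ContDiff ℝ 1 x)
    (hper : Function.Periodic x lam) (hpos : ∀ s h, 0 < h → h < lam → 0 < tangentHeight x s h)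
    {r : ℝ} (hr : 0 < r) :
    ∃ c > 0, ∀ s h, r ≤ h → h ≤ lam - r → c ≤ tangentHeight x s h := by
  obtain ⟨c, hc, hcx⟩ := (isCompact_Icc.prod isCompact_Icc).exists_forall_le'
    (s := Set.Icc 0 lam ×ˢ Set.Icc r (lam - r)) (continuous_tangentHeight hx).continuousOn
    (a := 0) fun p hp => hpos p.1 p.2 (hr.trans_le hp.2.1) (by linarith [hp.2.2])
  refine ⟨c, hc, fun s h hrh hhr => ?_⟩
  obtain ⟨u, hu, hsu⟩ := (periodic_tangentHeight_left hper h).exists_mem_Ico₀ hlam s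
  rw [hsu]
  exact hcx (u, h) ⟨Set.Ico_subset_Icc_self hu, hrh, hhr⟩

lemma IsAffineArcLength.exists_strictAntiOn_tangentHeight (haff : IsAffineArcLength x)
    (hlam : lam ≠ 0) (hx : ContDiff ℝ 4 x) (hper : Function.Periodic x lam) :
    ∃ r > 0, ∀ s, StrictAntiOn (tangentHeight x s) (Set.Icc (-r) 0) := by
  obtain ⟨M, hM, hMx⟩ := haff.exists_abs_deriv_tangentHeight_sub_le hlam hx hper
  have hx' : Differentiable ℝ x := hx.differentiable (by norm_num)
  refine ⟨1 / (M + 1), by positivity, fun s => strictAntiOn_of_deriv_neg (convex_Icc _ _)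
    (contDiff_tangentHeight hx s).continuous.continuousOn fun h hh => ?_⟩
  rw [interior_Icc] at hh
  have hMh : (M + 1) * |h| < 1 := by
    rw [abs_of_neg hh.2, mul_comm, ← lt_div_iff₀ (by positivity)]
    linarith [hh.1]
  have hsmall : M * |h| ^ 3 < |h| := by
    have hpos : 0 < |h| := abs_pos.2 hh.2.ne
    nlinarith [mul_pos hM hpos, mul_pos hpos hpos]
  have hle := (abs_le.1 (hMx s h)).2
  rw [(hasDerivAt_tangentHeight hx' s h).deriv]
  rw [abs_of_neg hh.2] at hsmall hle
  linarith

-- A second gap `b ≥ ρ` lies either in the middle of a period, where the height is bounded below,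
-- or near its end, where `b - lam` and `-a` would be two points of equal height on one branch.
lemma IsAffineArcLength.exists_forall_lt_of_tangentHeight_eq (haff : IsAffineArcLength x)
    (hlam : 0 < lam) (hx : ContDiff ℝ 4 x) (hper : Function.Periodic x lam)
    (hpos : ∀ s h, 0 < h → h < lam → 0 < tangentHeight x s h) {ρ : ℝ} (hρ : 0 < ρ) :
    ∃ r > 0, ∀ s a b, 0 < a → a ≤ r → a + b < lam →
      tangentHeight x s b = tangentHeight x s (-a) → b < ρ := by
  have hx₁ : ContDiff ℝ 1 x := hx.of_le (by norm_num)
  obtain ⟨r, hr, hanti⟩ := haff.exists_strictAntiOn_tangentHeight hlam.ne' hx hper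
  obtain ⟨c, hc, hcx⟩ :=
    exists_pos_forall_le_tangentHeight hlam hx₁ hper hpos (lt_min hρ hr)
  obtain ⟨δ, hδ, hδx⟩ := exists_forall_abs_lt_of_periodic hlam (continuous_tangentHeight hx₁)
    (periodic_tangentHeight_left hper) tangentHeight_zero hc
  refine ⟨min r (δ / 2), by positivity, fun s a b ha har hab heq => ?_⟩
  by_contra! hρb
  have har' : a ≤ r := har.trans (min_le_left _ _)
  rcases le_or_gt b (lam - min ρ r) with hb | hb
  · have haδ : |-a| < δ := by
      rw [abs_neg, abs_of_pos ha]
      linarith [har.trans (min_le_right r (δ / 2))]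
    have hlt := (abs_lt.1 (hδx s (-a) haδ)).2
    linarith [hcx s b ((min_le_left _ _).trans hρb) hb]
  · have hb' : b - lam ∈ Set.Icc (-r) 0 := ⟨by linarith [min_le_right ρ r], by linarith⟩
    have heq' : tangentHeight x s (b - lam) = tangentHeight x s (-a) := by
      rw [(periodic_tangentHeight_right hper s).sub_eq, heq]
    linarith [(hanti s).injOn hb' ⟨by linarith, by linarith⟩ heq']

end TangentHeightEstimates

section GapExpansion

variable {g g' : ℝ → ℝ} {M a b : ℝ}

lemma abs_sub_sub_sq_sub_sq_div_two_le (hg : ∀ h, HasDerivAt g (g' h) h) (hM : 0 ≤ M)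
    (hg' : ∀ h, |g' h - h| ≤ M * |h| ^ 3) (ha : 0 ≤ a) (hb : 0 ≤ b) :
    |g b - g a - (b ^ 2 - a ^ 2) / 2| ≤ M * max a b ^ 3 * |b - a| := by
  have hderiv (h : ℝ) : HasDerivAt (fun h => g h - h ^ 2 / 2) (g' h - h) h :=
    ((hg h).sub ((hasDerivAt_pow 2 h).div_const 2)).congr_deriv (by norm_num)
  have hbound : ∀ h ∈ Set.Icc 0 (max a b), ‖g' h - h‖ ≤ M * max a b ^ 3 := fun h hh => by
    refine (hg' h).trans ?_
    rw [abs_of_nonneg hh.1]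
    gcongr
    exacts [hh.1, hh.2]
  have hmvt := (convex_Icc 0 (max a b)).norm_image_sub_le_of_norm_hasDerivWithin_le
    (fun h _ => (hderiv h).hasDerivWithinAt) hbound ⟨ha, le_max_left a b⟩ ⟨hb, le_max_right a b⟩
  rw [Real.norm_eq_abs, Real.norm_eq_abs] at hmvt
  convert hmvt using 2
  ring

lemma abs_sub_mul_le_of_sq_le (hg : ∀ h, HasDerivAt g (g' h) h) (hM : 0 ≤ M)
    (hg' : ∀ h, |g' h - h| ≤ M * |h| ^ 3) (ha : 0 ≤ a) (hb : 0 ≤ b)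
    (hsmall : M * max a b ^ 2 ≤ 1 / 4) : |b - a| * a ≤ 4 * |g b - g a| := by
  have hquad := abs_sub_sub_sq_sub_sq_div_two_le hg hM hg' ha hb
  have hmax : max a b ≤ a + b := max_le_add_of_nonneg ha hb
  have hcube : M * max a b ^ 3 ≤ (a + b) / 4 :=
    calc M * max a b ^ 3 = M * max a b ^ 2 * max a b := by ring
      _ ≤ 1 / 4 * (a + b) := mul_le_mul hsmall hmax (ha.trans (le_max_left a b)) (by norm_num)
      _ = (a + b) / 4 := by ring
  have herr : M * max a b ^ 3 * |b - a| ≤ (a + b) / 4 * |b - a| := by gcongr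
  have hsq : |(b ^ 2 - a ^ 2) / 2| = (a + b) / 2 * |b - a| := by
    rw [show (b ^ 2 - a ^ 2) / 2 = (a + b) / 2 * (b - a) by ring, abs_mul,
      abs_of_nonneg (by positivity)]
  have htri := abs_sub_abs_le_abs_sub ((b ^ 2 - a ^ 2) / 2) (g b - g a)
  rw [hsq, abs_sub_comm ((b ^ 2 - a ^ 2) / 2)] at htri
  nlinarith [mul_nonneg hb (abs_nonneg (b - a))]

lemma abs_sub_le_mul_pow_four {K η q : ℝ} (hg : ∀ h, HasDerivAt g (g' h) h) (hM : 0 ≤ M)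
    (hg' : ∀ h, |g' h - h| ≤ M * |h| ^ 3) (ha : 0 < a) (ha₁ : a ≤ 1) (hb : 0 ≤ b) (hη : η ≤ 1)
    (hq : |q| ≤ K) (hsmall : M * max a b ^ 2 ≤ 1 / 4)
    (hgab : |g b - g a - q * a ^ 5 / 30| ≤ η * a ^ 6) : |b - a| ≤ (K + 4) * a ^ 4 := by
  have hK : 0 ≤ K := (abs_nonneg q).trans hq
  have hmain : |q * a ^ 5 / 30| ≤ K * a ^ 5 / 30 := by
    rw [abs_div, abs_mul, abs_of_pos (pow_pos ha 5), abs_of_pos (by norm_num : (0 : ℝ) < 30)]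
    gcongr
  have herr : η * a ^ 6 ≤ 1 * (a ^ 5 * 1) := by
    rw [pow_succ a 5]
    gcongr
  have htri := abs_add_le (g b - g a - q * a ^ 5 / 30) (q * a ^ 5 / 30)
  rw [sub_add_cancel] at htri
  have hdiff := abs_sub_mul_le_of_sq_le hg hM hg' ha.le hb hsmall
  refine le_of_mul_le_mul_right ?_ ha
  linarith [mul_nonneg hK (pow_pos ha 5).le]

lemma max_le_two_mul_of_abs_sub_le {L : ℝ} (ha : 0 ≤ a) (ha₁ : a ≤ 1) (hL : L * a ≤ 1)
    (hab : |b - a| ≤ L * a ^ 4) : max a b ≤ 2 * a := by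
  refine max_le (by linarith) ?_
  have hle : L * a ^ 4 ≤ a := calc
    L * a ^ 4 = L * a * a ^ 3 := by ring
    _ ≤ 1 * (a * 1) := by
        rw [pow_succ' a 2]
        gcongr
        exact pow_le_one₀ ha ha₁
    _ = a := by ring
  linarith [(abs_le.1 hab).2]

lemma abs_sub_sub_le_of_abs_sub_le {K η q : ℝ} (hg : ∀ h, HasDerivAt g (g' h) h) (hM : 0 ≤ M)
    (hg' : ∀ h, |g' h - h| ≤ M * |h| ^ 3) (ha : 0 < a) (hb : 0 ≤ b) (hη : η ≤ 1)
    (hq : |q| ≤ K) (hsmall : M * max a b ^ 2 ≤ 1 / 4) (ha₁ : (K + 4) * a ≤ 1)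
    (hgab : |g b - g a - q * a ^ 5 / 30| ≤ η * a ^ 6) :
    |b - a - 1 / 30 * q * a ^ 4| ≤ (η + (8 * M * (K + 4) + (K + 4) ^ 2) * a) * a ^ 5 := by
  have hK : 0 ≤ K := (abs_nonneg q).trans hq
  have ha_one : a ≤ 1 := by linarith [mul_nonneg hK ha.le]
  have hcrude := abs_sub_le_mul_pow_four hg hM hg' ha ha_one hb hη hq hsmall hgab
  have hmax := max_le_two_mul_of_abs_sub_le ha.le ha_one ha₁ hcrude
  have hcubic : M * max a b ^ 3 * |b - a| ≤ 8 * M * (K + 4) * a * a ^ 6 := calc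
    M * max a b ^ 3 * |b - a| ≤ M * (2 * a) ^ 3 * ((K + 4) * a ^ 4) := by gcongr
    _ = 8 * M * (K + 4) * a * a ^ 6 := by ring
  have hsq : |(b - a) ^ 2 / 2| ≤ (K + 4) ^ 2 * a * a ^ 6 := by
    rw [abs_div, abs_pow, abs_two]
    calc |b - a| ^ 2 / 2 ≤ ((K + 4) * a ^ 4) ^ 2 / 1 := by gcongr; norm_num
      _ = (K + 4) ^ 2 * a ^ 7 * a := by ring
      _ ≤ (K + 4) ^ 2 * a ^ 7 * 1 := by gcongr
      _ = (K + 4) ^ 2 * a * a ^ 6 := by ring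
  have hsplit : (b - a - 1 / 30 * q * a ^ 4) * a =
      (g b - g a - q * a ^ 5 / 30) - (g b - g a - (b ^ 2 - a ^ 2) / 2) - (b - a) ^ 2 / 2 := by
    ring
  refine le_of_mul_le_mul_right ?_ ha
  calc |b - a - 1 / 30 * q * a ^ 4| * a = |(b - a - 1 / 30 * q * a ^ 4) * a| := by
        rw [abs_mul, abs_of_pos ha]
    _ ≤ |g b - g a - q * a ^ 5 / 30| + |g b - g a - (b ^ 2 - a ^ 2) / 2| +
        |(b - a) ^ 2 / 2| := by
        rw [hsplit]
        exact (abs_sub _ _).trans (add_le_add_left (abs_sub _ _) _)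
    _ ≤ η * a ^ 6 + 8 * M * (K + 4) * a * a ^ 6 + (K + 4) ^ 2 * a * a ^ 6 := by
        gcongr
        exact (abs_sub_sub_sq_sub_sq_div_two_le hg hM hg' ha.le hb).trans hcubic
    _ = (η + (8 * M * (K + 4) + (K + 4) ^ 2) * a) * a ^ 5 * a := by ring

end GapExpansion

section GapRecursion

variable {x : ℝ → ℝ × ℝ} {lam : ℝ}

lemma IsAffineArcLength.exists_abs_gap_sub_le (haff : IsAffineArcLength x) (hlam : 0 < lam)
    (hx : ContDiff ℝ 6 x) (hper : Function.Periodic x lam)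
    (hpos : ∀ s h, 0 < h → h < lam → 0 < tangentHeight x s h) {ε : ℝ} (hε : 0 < ε) :
    ∃ r > 0, ∀ s a b, 0 < a → a ≤ r → 0 < b → a + b < lam →
      tangentHeight x s b = tangentHeight x s (-a) →
      |b - a - 1 / 30 * deriv (affineCurvature x) s * a ^ 4| ≤ ε * a ^ 5 := by
  have hx₄ : ContDiff ℝ 4 x := hx.of_le (by norm_num)
  obtain ⟨M, hM, hMx⟩ := haff.exists_abs_deriv_tangentHeight_sub_le hlam.ne' hx₄ hper
  obtain ⟨K, hK, hKx⟩ := exists_abs_deriv_affineCurvature_le hlam.ne' hx₄ hper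
  have hη : 0 < min 1 (ε / 2) := by positivity
  obtain ⟨δ, hδ, hδx⟩ := haff.exists_abs_tangentHeight_sub_neg_le hlam hx hper hη
  have hρ : 0 < 1 / (4 * (M + 1)) := by positivity
  obtain ⟨r, hr, hrx⟩ := haff.exists_forall_lt_of_tangentHeight_eq hlam hx₄ hper hpos hρ
  set L := 8 * M * (K + 4) + (K + 4) ^ 2
  refine ⟨min r (min (δ / 2) (min (1 / (4 * (M + 1))) (min (1 / (K + 4)) (ε / 2 / L)))),
    by positivity, fun s a b ha har hb hab heq => ?_⟩
  simp only [le_min_iff] at har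
  obtain ⟨har, haδ, haρ, haK, haL⟩ := har
  rw [le_div_iff₀' (by positivity)] at haK haL
  have hsmall : M * max a b ^ 2 ≤ 1 / 4 := by
    have hmax : max a b ≤ 1 / (4 * (M + 1)) := max_le haρ (hrx s a b ha har hab heq).le
    rw [le_div_iff₀' (by positivity)] at hmax
    nlinarith [ha.trans_le (le_max_left a b)]
  have hodd := hδx s a ha (by linarith)
  rw [← heq] at hodd
  refine (abs_sub_sub_le_of_abs_sub_le
    (hasDerivAt_tangentHeight (hx.differentiable (by norm_num)) s) hM.le (hMx s) ha hb.le
    (min_le_left 1 (ε / 2)) (hKx s) hsmall haK hodd).trans ?_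
  gcongr
  linarith [min_le_right 1 (ε / 2)]

end GapRecursion

section Convexity

variable {x : ℝ → ℝ × ℝ} {lam : ℝ}

lemma exists_forall_lt_of_mem_frontier {E : Type*} [AddCommGroup E] [TopologicalSpace E]
    [Module ℝ E] [IsTopologicalAddGroup E] [ContinuousSMul ℝ E] {C : Set E}
    (hC : StrictConvex ℝ C) {p : E} (hpC : p ∈ C) (hp : p ∈ frontier C) :
    ∃ f : E →L[ℝ] ℝ, ∀ z ∈ C, z ≠ p → f z < f p := by
  obtain ⟨f, hf⟩ := geometric_hahn_banach_open_point hC.convex.interior isOpen_interior hp.2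
  refine ⟨f, fun z hz hzp => ?_⟩
  have hmid := hf _ (hC hz hpC hzp one_half_pos one_half_pos (add_halves 1))
  simp only [map_add, map_smul, smul_eq_mul] at hmid
  linarith

lemma ne_of_periodic_of_injOn_Ico {α : Type*} {f : ℝ → α} {T : ℝ} (hf : Function.Periodic f T)
    (hinj : Set.InjOn f (Set.Ico 0 T)) (u : ℝ) {h : ℝ} (h₀ : 0 < h) (hT : h < T) :
    f (u + h) ≠ f u := fun heq => by
  have hT₀ : 0 < T := h₀.trans hT
  obtain ⟨v, hv, hvper⟩ := Function.Periodic.exists_mem_Ico₀ (f := fun t => (f t, f (t + h)))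
    (fun t => by simp only [hf t, add_right_comm t T h, hf (t + h)]) hT₀ u
  obtain ⟨hfv, hfvh⟩ := Prod.mk.inj hvper
  have hvh : f (v + h) = f v := by rw [← hfv, ← hfvh, heq]
  rcases lt_or_ge (v + h) T with hlt | hge
  · linarith [hinj ⟨by linarith [hv.1], hlt⟩ hv hvh]
  · rw [← hf.sub_eq] at hvh
    linarith [hinj ⟨by linarith, by linarith [hv.2]⟩ hv hvh]

lemma deriv_deriv_nonpos_of_isLocalMax {f : ℝ → ℝ} {a : ℝ} (hmax : IsLocalMax f a)
    (hf : ContinuousAt f a) : deriv (deriv f) a ≤ 0 := by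
  by_contra! hpos
  have hmin : IsLocalMin f a := isLocalMin_of_deriv_deriv_pos hpos hmax.deriv_eq_zero hf
  have hconst : f =ᶠ[𝓝 a] fun _ => f a := by
    filter_upwards [hmax, hmin] with t hle hge using le_antisymm hle hge
  rw [hconst.deriv.deriv_eq] at hpos
  simp at hpos

lemma IsAffineArcLength.tangentHeight_pos (haff : IsAffineArcLength x) (hx : ContDiff ℝ 2 x)
    (hper : Function.Periodic x lam) (hinj : Set.InjOn x (Set.Ico 0 lam)) {C : Set (ℝ × ℝ)}
    (hC : StrictConvex ℝ C) (hclosed : IsClosed C) (hxC : ∀ t, x t ∈ frontier C) (s : ℝ) {h : ℝ}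
    (h₀ : 0 < h) (hlam : h < lam) : 0 < tangentHeight x s h := by
  have hmem (t : ℝ) : x t ∈ C := hclosed.frontier_subset (hxC t)
  obtain ⟨f, hf⟩ := exists_forall_lt_of_mem_frontier hC (hmem s) (hxC s)
  have hlt : f (x (s + h)) < f (x s) :=
    hf _ (hmem _) (ne_of_periodic_of_injOn_Ico hper hinj s h₀ hlam)
  have hmax : IsLocalMax (fun t => f (x t)) s := Eventually.of_forall fun t => by
    rcases eq_or_ne (x t) (x s) with heq | hne
    · exact (congrArg f heq).le
    · exact (hf _ (hmem t) hne).le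
  have hderiv (t : ℝ) : HasDerivAt (fun t => f (x t)) (f (deriv x t)) t :=
    f.hasFDerivAt.comp_hasDerivAt t (hx.differentiable (by norm_num) t).hasDerivAt
  have hderiv₂ : HasDerivAt (fun t => f (deriv x t)) (f (iteratedDeriv 2 x s)) s := by
    rw [← iteratedDeriv_one]
    exact f.hasFDerivAt.comp_hasDerivAt s
      (hasDerivAt_iteratedDeriv hx (j := 1) (by norm_num) s)
  have hcrit : f (deriv x s) = 0 := hmax.hasDerivAt_eq_zero (hderiv s)
  have hheight (t : ℝ) :
      f (x (s + t)) - f (x s) = tangentHeight x s t * f (iteratedDeriv 2 x s) := by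
    rw [← map_sub, eq_om_smul_add_om_smul (haff s) (x (s + t) - x s), map_add, map_smul, map_smul,
      hcrit, smul_zero, zero_add, smul_eq_mul, tangentHeight]
  have hconcave : f (iteratedDeriv 2 x s) ≤ 0 := by
    rw [← hderiv₂.deriv, ← funext fun t => (hderiv t).deriv]
    exact deriv_deriv_nonpos_of_isLocalMax hmax (hderiv s).continuousAt
  by_contra! hneg
  linarith [hheight h, hlt, mul_nonneg_of_nonpos_of_nonpos hneg hconcave]

end Convexity

section DoubleArea

variable {x : ℝ → ℝ × ℝ} {lam : ℝ}

/-- Twice the signed area of the triangle with vertices `A`, `B`, `C`. -/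
noncomputable def doubleArea (A B C : ℝ × ℝ) : ℝ :=
  om (B - A) (C - A)

lemma doubleArea_swap_left (A B C : ℝ × ℝ) : doubleArea B A C = -doubleArea A B C := by
  simp only [doubleArea, om, Prod.fst_sub, Prod.snd_sub]
  ring

lemma doubleArea_swap_right (A B C : ℝ × ℝ) : doubleArea A C B = -doubleArea A B C := by
  unfold doubleArea om
  ring

lemma hasDerivAt_doubleArea {u : ℝ → ℝ × ℝ} {u' : ℝ × ℝ} {t : ℝ} (A B : ℝ × ℝ)
    (hu : HasDerivAt u u' t) : HasDerivAt (fun t => doubleArea A B (u t)) (om (B - A) u') t :=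
  (hasDerivAt_om (hasDerivAt_const t (B - A)) (hu.sub_const A)).congr_deriv (by simp [om])

lemma om_deriv_sub_pos (hpos : ∀ s h, 0 < h → h < lam → 0 < tangentHeight x s h) {t t' : ℝ}
    (htt' : t < t') (ht' : t' < t + lam) : 0 < om (deriv x t) (x t' - x t) := by
  have h := hpos t (t' - t) (by linarith) (by linarith)
  rwa [tangentHeight, add_sub_cancel] at h

-- In the frame of the tangent at `x t₁`, the slope of the chord from `x t₁` to `x t` increases.
lemma doubleArea_pos (hx : Differentiable ℝ x) (hper : Function.Periodic x lam)
    (hpos : ∀ s h, 0 < h → h < lam → 0 < tangentHeight x s h) {t₁ t₂ t₃ : ℝ} (h₁₂ : t₁ < t₂)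
    (h₂₃ : t₂ < t₃) (h₃ : t₃ < t₁ + lam) : 0 < doubleArea (x t₁) (x t₂) (x t₃) := by
  have hden {t : ℝ} (ht : t₁ < t) (ht' : t < t₁ + lam) : 0 < om (deriv x t₁) (x t - x t₁) :=
    om_deriv_sub_pos hpos ht ht'
  have hslope {t : ℝ} (ht : t₁ < t) (ht' : t < t₁ + lam) :
      HasDerivAt (fun t => doubleArea (x t₁) (x t₃) (x t) / om (deriv x t₁) (x t - x t₁))
        (om (deriv x t₁) (x t₃ - x t₁) * om (deriv x t) (x t₁ - x t) /
          om (deriv x t₁) (x t - x t₁) ^ 2) t := by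
    have hd := hasDerivAt_om (hasDerivAt_const t (deriv x t₁))
      ((hx t).hasDerivAt.sub_const (x t₁))
    refine ((hasDerivAt_doubleArea _ _ (hx t).hasDerivAt).div hd (hden ht ht').ne').congr_deriv ?_
    congr 1
    simp only [doubleArea, om, Prod.fst_sub, Prod.snd_sub, Prod.fst_zero, Prod.snd_zero]
    ring
  have hmono : StrictMonoOn
      (fun t => doubleArea (x t₁) (x t₃) (x t) / om (deriv x t₁) (x t - x t₁))
      (Set.Icc t₂ t₃) := by
    refine strictMonoOn_of_deriv_pos (convex_Icc _ _) (fun t ht =>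
      (hslope (by linarith [ht.1]) (by linarith [ht.2])).continuousAt.continuousWithinAt)
      fun t ht => ?_
    rw [interior_Icc] at ht
    have ht₁ : t₁ < t := h₁₂.trans ht.1
    have htlam : t < t₁ + lam := ht.2.trans h₃
    have hback : 0 < om (deriv x t) (x t₁ - x t) := by
      rw [← hper t₁]
      exact om_deriv_sub_pos hpos htlam (by linarith)
    rw [(hslope ht₁ htlam).deriv]
    exact div_pos (mul_pos (hden (h₁₂.trans h₂₃) h₃) hback) (pow_pos (hden ht₁ htlam) 2)
  have hlt := hmono ⟨le_rfl, h₂₃.le⟩ ⟨h₂₃.le, le_rfl⟩ h₂₃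
  simp only [doubleArea, om_self, zero_div] at hlt
  have hneg := (div_neg_iff.1 hlt).resolve_left fun h => (hden h₁₂ (h₂₃.trans h₃)).not_gt h.2
  rw [← doubleArea, doubleArea_swap_right] at hneg
  exact neg_lt_zero.1 hneg.1

lemma doubleArea_nonneg (hx : Differentiable ℝ x) (hper : Function.Periodic x lam)
    (hpos : ∀ s h, 0 < h → h < lam → 0 < tangentHeight x s h) {t₁ t₂ t₃ : ℝ} (h₁₂ : t₁ ≤ t₂)
    (h₂₃ : t₂ ≤ t₃) (h₃ : t₃ ≤ t₁ + lam) : 0 ≤ doubleArea (x t₁) (x t₂) (x t₃) := by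
  rcases h₁₂.eq_or_lt with rfl | h₁₂
  · simp [doubleArea, om]
  rcases h₂₃.eq_or_lt with rfl | h₂₃
  · exact (om_self _).ge
  rcases h₃.eq_or_lt with rfl | h₃
  · simp [doubleArea, hper t₁, om]
  exact (doubleArea_pos hx hper hpos h₁₂ h₂₃ h₃).le

end DoubleArea

section TriangleArea

variable {A p B : ℝ × ℝ} {K S : Set (ℝ × ℝ)}

lemma doubleArea_convex_combination (A B : ℝ × ℝ) {a b : ℝ} (hab : a + b = 1) (z w : ℝ × ℝ) :
    doubleArea A B (a • z + b • w) = a * doubleArea A B z + b * doubleArea A B w := by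
  obtain rfl : a = 1 - b := by linarith
  simp only [doubleArea, om, Prod.fst_sub, Prod.snd_sub, Prod.fst_add, Prod.snd_add,
    Prod.smul_fst, Prod.smul_snd, smul_eq_mul]
  ring

lemma convex_setOf_doubleArea_nonneg (A B : ℝ × ℝ) : Convex ℝ {z | 0 ≤ doubleArea A B z} :=
  fun z hz w hw a b ha hb hab => by
    simp only [Set.mem_ofPred_eq] at hz hw ⊢
    rw [doubleArea_convex_combination A B hab]
    positivity

lemma doubleArea_add_doubleArea_add_doubleArea (A p B z : ℝ × ℝ) :
    doubleArea p B z + doubleArea B A z + doubleArea A p z = doubleArea A p B := by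
  unfold doubleArea om
  simp only [Prod.fst_sub, Prod.snd_sub]
  ring

lemma eq_barycentric (hΔ : doubleArea A p B ≠ 0) (z : ℝ × ℝ) :
    z = (doubleArea p B z / doubleArea A p B) • A + (doubleArea B A z / doubleArea A p B) • p +
      (doubleArea A p z / doubleArea A p B) • B := by
  ext <;> simp only [Prod.fst_add, Prod.snd_add, Prod.smul_fst, Prod.smul_snd, smul_eq_mul] <;>
    field_simp <;> simp only [doubleArea, om, Prod.fst_sub, Prod.snd_sub] <;> ring

lemma mem_of_doubleArea_nonneg (hK : Convex ℝ K) (hA : A ∈ K) (hp : p ∈ K) (hB : B ∈ K)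
    (hΔ : 0 < doubleArea A p B) {z : ℝ × ℝ} (h₁ : 0 ≤ doubleArea p B z)
    (h₂ : 0 ≤ doubleArea B A z) (h₃ : 0 ≤ doubleArea A p z) : z ∈ K := by
  have hsum : doubleArea p B z / doubleArea A p B + doubleArea B A z / doubleArea A p B +
      doubleArea A p z / doubleArea A p B = 1 := by
    rw [← add_div, ← add_div, doubleArea_add_doubleArea_add_doubleArea, div_self hΔ.ne']
  have hmem := hK.sum_mem (t := Finset.univ) (z := ![A, p, B])
    (w := ![doubleArea p B z / doubleArea A p B, doubleArea B A z / doubleArea A p B,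
      doubleArea A p z / doubleArea A p B])
    (fun i _ => by
      fin_cases i
      exacts [div_nonneg h₁ hΔ.le, div_nonneg h₂ hΔ.le, div_nonneg h₃ hΔ.le])
    (by
      rw [Fin.sum_univ_three]
      exact hsum)
    (fun i _ => by
      fin_cases i
      exacts [hA, hp, hB])
  rw [eq_barycentric hΔ.ne' z]
  simpa [Fin.sum_univ_three] using hmem

lemma mem_segment_of_doubleArea_nonneg (hΔ : 0 < doubleArea A p B) {z : ℝ × ℝ}
    (h₁ : 0 ≤ doubleArea p B z) (h₂ : doubleArea B A z = 0) (h₃ : 0 ≤ doubleArea A p z) :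
    z ∈ segment ℝ A B := by
  have hsum := doubleArea_add_doubleArea_add_doubleArea A p B z
  rw [h₂, add_zero] at hsum
  refine ⟨_, _, div_nonneg h₁ hΔ.le, div_nonneg h₃ hΔ.le, ?_, ?_⟩
  · rw [← add_div, hsum, div_self hΔ.ne']
  · simpa [h₂] using (eq_barycentric hΔ.ne' z).symm

/-- The triangle `A p B` without its side `A B`, when `A`, `p`, `B` are positively oriented. -/
def halfOpenTriangle (A p B : ℝ × ℝ) : Set (ℝ × ℝ) :=
  {z | 0 < doubleArea B A z ∧ 0 ≤ doubleArea A p z ∧ 0 ≤ doubleArea p B z}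

lemma disjoint_halfOpenTriangle (hKAB : ∀ z ∈ K, doubleArea B A z ≤ 0) :
    Disjoint K (halfOpenTriangle A p B) :=
  Set.disjoint_left.2 fun z hz hzT => (hKAB z hz).not_gt hzT.1

lemma doubleArea_left_self (p B : ℝ × ℝ) : doubleArea p B p = 0 := by
  simp [doubleArea, om]

lemma doubleArea_right_self (A p : ℝ × ℝ) : doubleArea A p p = 0 :=
  om_self _

lemma doubleArea_swap_rotate (A p B : ℝ × ℝ) : doubleArea B A p = doubleArea A p B := by
  rw [← doubleArea_add_doubleArea_add_doubleArea A p B p, doubleArea_left_self,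
    doubleArea_right_self, zero_add, add_zero]

-- A segment from `p` to `z ∈ K` leaves the half-open triangle through its side `A B ⊆ K`.
lemma mem_of_mem_segment_of_doubleArea_nonpos (hK : Convex ℝ K) (hA : A ∈ K) (hB : B ∈ K)
    (hΔ : 0 < doubleArea A p B) {z w : ℝ × ℝ} (hz : z ∈ K) (hw : w ∈ segment ℝ p z)
    (hBAw : doubleArea B A w ≤ 0) (hApw : 0 ≤ doubleArea A p w) (hpBw : 0 ≤ doubleArea p B w) :
    w ∈ K := by
  have hgap : 0 < doubleArea A p B - doubleArea B A w := by linarith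
  set t := doubleArea A p B / (doubleArea A p B - doubleArea B A w)
  have ht : t ∈ Set.Icc (0 : ℝ) 1 :=
    ⟨by positivity, (div_le_one hgap).2 (by linarith)⟩
  set q := AffineMap.lineMap p w t with hq
  have hpq : Wbtw ℝ p q w := ⟨t, ht, rfl⟩
  have hqseg : q ∈ segment ℝ p w := mem_segment_iff_wbtw.2 hpq
  have hBAq : doubleArea B A q = 0 := by
    rw [hq, AffineMap.lineMap_apply_module,
      doubleArea_convex_combination _ _ (sub_add_cancel 1 t), doubleArea_swap_rotate]
    simp only [t]
    field_simp
    ring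
  have hqAB : q ∈ segment ℝ A B := mem_segment_of_doubleArea_nonneg hΔ
    ((convex_setOf_doubleArea_nonneg p B).segment_subset (doubleArea_left_self p B).ge hpBw hqseg)
    hBAq
    ((convex_setOf_doubleArea_nonneg A p).segment_subset (doubleArea_right_self A p).ge hApw hqseg)
  have hqwz : Wbtw ℝ q w z := (mem_segment_iff_wbtw.1 hw).trans_left_right hpq
  exact hK.segment_subset (hK.segment_subset hA hB hqAB) hz (mem_segment_iff_wbtw.2 hqwz)

lemma convexJoin_singleton_eq_union_halfOpenTriangle (hK : Convex ℝ K) (hA : A ∈ K) (hB : B ∈ K)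
    (hΔ : 0 < doubleArea A p B) (hKAp : ∀ z ∈ K, 0 ≤ doubleArea A p z)
    (hKpB : ∀ z ∈ K, 0 ≤ doubleArea p B z) :
    convexJoin ℝ {p} K = K ∪ halfOpenTriangle A p B := by
  have hKne : K.Nonempty := ⟨A, hA⟩
  have hKsub : K ⊆ convexJoin ℝ {p} K := subset_convexJoin_right (Set.singleton_nonempty p)
  have hpmem : p ∈ convexJoin ℝ {p} K := subset_convexJoin_left hKne rfl
  refine Set.Subset.antisymm (fun w hw => ?_) (Set.union_subset hKsub fun w hw => ?_)
  · obtain ⟨_, rfl, z, hz, hw⟩ := mem_convexJoin.1 hw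
    have hApw : 0 ≤ doubleArea A _ w := (convex_setOf_doubleArea_nonneg A _).segment_subset
      (doubleArea_right_self A _).ge (hKAp z hz) hw
    have hpBw : 0 ≤ doubleArea _ B w := (convex_setOf_doubleArea_nonneg _ B).segment_subset
      (doubleArea_left_self _ B).ge (hKpB z hz) hw
    rcases lt_or_ge 0 (doubleArea B A w) with hBAw | hBAw
    · exact Or.inr ⟨hBAw, hApw, hpBw⟩
    · exact Or.inl (mem_of_mem_segment_of_doubleArea_nonpos hK hA hB hΔ hz hw hBAw hApw hpBw)
  · exact mem_of_doubleArea_nonneg ((convex_singleton p).convexJoin hK) (hKsub hA) hpmem (hKsub hB)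
      hΔ hw.2.2 hw.1.le hw.2.1

lemma volume_real_rightTriangle {c : ℝ} (hc : 0 ≤ c) :
    volume.real {q : ℝ × ℝ | 0 < q.1 ∧ 0 ≤ q.2 ∧ q.1 + q.2 ≤ c} = c ^ 2 / 2 := by
  have hmeas : MeasurableSet {q : ℝ × ℝ | 0 < q.1 ∧ 0 ≤ q.2 ∧ q.1 + q.2 ≤ c} :=
    (measurableSet_lt measurable_const measurable_fst).inter
      ((measurableSet_le measurable_const measurable_snd).inter
        (measurableSet_le (measurable_fst.add measurable_snd) measurable_const))
  have hslice (a : ℝ) : volume (Prod.mk a ⁻¹' {q : ℝ × ℝ | 0 < q.1 ∧ 0 ≤ q.2 ∧ q.1 + q.2 ≤ c}) =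
      (Set.Ioc 0 c).indicator (fun a => ENNReal.ofReal (c - a)) a := by
    by_cases ha : a ∈ Set.Ioc 0 c
    · rw [Set.indicator_of_mem ha, ← sub_zero (c - a), ← Real.volume_Icc]
      congr 1
      ext b
      simp [ha.1, le_sub_iff_add_le']
    · rw [Set.indicator_of_notMem ha, ← measure_empty (μ := (volume : Measure ℝ))]
      congr 1
      refine Set.eq_empty_of_forall_notMem fun b hb => ha ⟨hb.1, ?_⟩
      linarith [hb.2.1, hb.2.2]
  have hnonneg : 0 ≤ᵐ[volume.restrict (Set.Ioc 0 c)] fun a => c - a :=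
    (ae_restrict_mem measurableSet_Ioc).mono fun a ha => sub_nonneg.2 ha.2
  have hint : ∫ a in Set.Ioc 0 c, (c - a) = c ^ 2 / 2 := by
    rw [← intervalIntegral.integral_of_le hc, intervalIntegral.integral_sub (by simp) (by simp),
      intervalIntegral.integral_const, integral_id, smul_eq_mul]
    ring
  rw [measureReal_def, Measure.volume_eq_prod, Measure.prod_apply hmeas, lintegral_congr hslice,
    lintegral_indicator measurableSet_Ioc, ← ofReal_integral_eq_lintegral_ofReal
      ((by fun_prop : Continuous fun a => c - a).integrableOn_Ioc) hnonneg, hint,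
    ENNReal.toReal_ofReal (by positivity)]

lemma measurableSet_halfOpenTriangle (A p B : ℝ × ℝ) :
    MeasurableSet (halfOpenTriangle A p B) := by
  have hcont (C D : ℝ × ℝ) : Continuous (doubleArea C D) :=
    continuous_om continuous_const (continuous_id.sub continuous_const)
  exact (measurableSet_lt measurable_const (hcont B A).measurable).inter
    ((measurableSet_le measurable_const (hcont A p).measurable).inter
      (measurableSet_le measurable_const (hcont p B).measurable))

lemma volume_real_halfOpenTriangle (hΔ : 0 < doubleArea A p B) :
    volume.real (halfOpenTriangle A p B) = doubleArea A p B / 2 := by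
  set Δ := doubleArea A p B
  let L : ℝ × ℝ →ₗ[ℝ] ℝ × ℝ := Matrix.toLin (Module.Basis.finTwoProd ℝ) (Module.Basis.finTwoProd ℝ)
    !![(B - A).2, -(B - A).1; -(p - A).2, (p - A).1]
  have hdet : LinearMap.det L = Δ := by
    rw [LinearMap.det_toLin, Matrix.det_fin_two_of]
    simp only [Δ, doubleArea, om]
    ring
  have hpre : halfOpenTriangle A p B =
      (· + -A) ⁻¹' (L ⁻¹' {q | 0 < q.1 ∧ 0 ≤ q.2 ∧ q.1 + q.2 ≤ Δ}) := by
    ext z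
    have hsum := doubleArea_add_doubleArea_add_doubleArea A p B z
    have hL₁ : (L (z - A)).1 = doubleArea B A z := by
      simp only [L, Matrix.toLin_finTwoProd_apply, doubleArea, om, Prod.fst_sub, Prod.snd_sub]
      ring
    have hL₂ : (L (z - A)).2 = doubleArea A p z := by
      simp only [L, Matrix.toLin_finTwoProd_apply, doubleArea, om, Prod.fst_sub, Prod.snd_sub]
      ring
    simp only [halfOpenTriangle, Set.mem_preimage, Set.mem_ofPred_eq, ← sub_eq_add_neg, hL₁, hL₂]
    have hiff : 0 ≤ doubleArea p B z ↔ doubleArea B A z + doubleArea A p z ≤ Δ := by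
      constructor <;> intro <;> linarith
    rw [hiff]
  rw [hpre, measureReal_def, measure_preimage_add_right,
    Measure.addHaar_preimage_linearMap _ (hdet.trans_ne hΔ.ne'), hdet, ENNReal.toReal_mul,
    ← measureReal_def, volume_real_rightTriangle hΔ.le,
    ENNReal.toReal_ofReal (abs_nonneg _), abs_of_pos (inv_pos.2 hΔ)]
  field_simp

lemma volume_real_convexHull_insert (hS : S.Finite) (hA : A ∈ S) (hB : B ∈ S)
    (hΔ : 0 < doubleArea A p B) (hSAB : ∀ z ∈ S, 0 ≤ doubleArea A B z)
    (hSAp : ∀ z ∈ S, 0 ≤ doubleArea A p z) (hSpB : ∀ z ∈ S, 0 ≤ doubleArea p B z) :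
    volume.real (convexHull ℝ (insert p S)) =
      volume.real (convexHull ℝ S) + doubleArea A p B / 2 := by
  have hhull {C D : ℝ × ℝ} (h : ∀ z ∈ S, 0 ≤ doubleArea C D z) :
      ∀ z ∈ convexHull ℝ S, 0 ≤ doubleArea C D z :=
    convexHull_min h (convex_setOf_doubleArea_nonneg C D)
  have hfin : volume (convexHull ℝ S) ≠ ⊤ := (hS.isCompact_convexHull ℝ).measure_lt_top.ne
  have hΔT := volume_real_halfOpenTriangle hΔ
  have hfinT : volume (halfOpenTriangle A p B) < ⊤ :=
    (ENNReal.toReal_pos_iff.1 (by rw [← measureReal_def, hΔT]; exact half_pos hΔ)).2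
  rw [convexHull_insert ⟨A, hA⟩, convexJoin_singleton_eq_union_halfOpenTriangle
    (convex_convexHull ℝ S) (subset_convexHull ℝ S hA) (subset_convexHull ℝ S hB) hΔ
    (hhull hSAp) (hhull hSpB), measureReal_union
    (disjoint_halfOpenTriangle fun z hz => by
      rw [doubleArea_swap_left]
      exact neg_nonpos.2 (hhull hSAB z hz))
    (measurableSet_halfOpenTriangle A p B) hfin hfinT.ne, hΔT]

end TriangleArea

section InscribedPolygon

variable {x : ℝ → ℝ × ℝ} {lam : ℝ} {σ : ℤ → ℝ} {n : ℕ}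

/-- `σ` lists in increasing order the parameters of `n` points of a closed curve of period `lam`,
continued over all periods by `σ (i + n) = σ i + lam`. -/
structure IsCyclicPartition (lam : ℝ) (n : ℕ) (σ : ℤ → ℝ) : Prop where
  strictMono : StrictMono σ
  add_period : ∀ i, σ (i + n) = σ i + lam

/-- The polygon with vertices `x (σ i)` has the largest area among the polygons with at most `n`
vertices on the curve `x`. -/
def IsBestInscribed (x : ℝ → ℝ × ℝ) (n : ℕ) (σ : ℤ → ℝ) : Prop :=
  ∀ S : Finset (ℝ × ℝ), ↑S ⊆ Set.range x → S.card ≤ n →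
    volume.real (convexHull ℝ (S : Set (ℝ × ℝ))) ≤
      volume.real (convexHull ℝ (Set.range fun i => x (σ i)))

namespace IsCyclicPartition

lemma periodic_comp (hσ : IsCyclicPartition lam n σ) (hper : Function.Periodic x lam) :
    Function.Periodic (fun i => x (σ i)) (n : ℤ) := fun i => by
  simp only [hσ.add_period, hper (σ i)]

lemma apply_add_one_lt (hσ : IsCyclicPartition lam n σ) (hn : 3 ≤ n) (i : ℤ) :
    σ (i + 1) < σ (i - 1) + lam := by
  rw [← hσ.add_period]
  exact hσ.strictMono (by omega)

lemma range_eq_insert_image_Ioo (hσ : IsCyclicPartition lam n σ) (hn : 0 < n)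
    (hper : Function.Periodic x lam) (i : ℤ) :
    (Set.range fun i => x (σ i)) = insert (x (σ i)) ((fun j => x (σ j)) '' Set.Ioo i (i + n)) := by
  rw [← (hσ.periodic_comp hper).image_Ioc (by omega) i, ← Set.Ioo_insert_right (by omega),
    Set.image_insert_eq, hσ.add_period, hper]

lemma volume_real_convexHull_insert_image_Ioo (hσ : IsCyclicPartition lam n σ) (hn : 3 ≤ n)
    (hx : Differentiable ℝ x) (hper : Function.Periodic x lam)
    (hpos : ∀ s h, 0 < h → h < lam → 0 < tangentHeight x s h) {i : ℤ} {t : ℝ}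
    (ht : t ∈ Set.Ioo (σ (i - 1)) (σ (i + 1))) :
    volume.real (convexHull ℝ (insert (x t) ((fun j => x (σ j)) '' Set.Ioo i (i + n)))) =
      volume.real (convexHull ℝ ((fun j => x (σ j)) '' Set.Ioo i (i + n))) +
        doubleArea (x (σ (i - 1))) (x t) (x (σ (i + 1))) / 2 := by
  have hbetween : ∀ z ∈ (fun j => x (σ j)) '' Set.Ioo i (i + n),
      ∃ u, σ (i + 1) ≤ u ∧ u ≤ σ (i - 1) + lam ∧ x u = z := by
    rintro _ ⟨j, hj, rfl⟩
    refine ⟨σ j, hσ.strictMono.monotone hj.1, ?_, rfl⟩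
    rw [← hσ.add_period]
    exact hσ.strictMono.monotone (by linarith [Int.lt_iff_add_one_le.1 hj.2])
  have hlast := hσ.apply_add_one_lt hn i
  have hmem : x (σ (i - 1)) ∈ (fun j => x (σ j)) '' Set.Ioo i (i + n) :=
    ⟨i - 1 + n, ⟨by omega, by omega⟩, hσ.periodic_comp hper (i - 1)⟩
  refine volume_real_convexHull_insert ((Set.finite_Ioo _ _).image _) hmem
    ⟨i + 1, ⟨by omega, by omega⟩, rfl⟩ (doubleArea_pos hx hper hpos ht.1 ht.2 hlast)
    (fun z hz => ?_) (fun z hz => ?_) (fun z hz => ?_)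
  all_goals
    obtain ⟨u, hu, hulam, rfl⟩ := hbetween z hz
    exact doubleArea_nonneg hx hper hpos (by linarith [ht.1, ht.2]) (by linarith [ht.1, ht.2])
      (by linarith [ht.1, ht.2])

lemma om_deriv_chord_eq_zero (hσ : IsCyclicPartition lam n σ) (hbest : IsBestInscribed x n σ)
    (hn : 3 ≤ n) (hx : Differentiable ℝ x) (hper : Function.Periodic x lam)
    (hpos : ∀ s h, 0 < h → h < lam → 0 < tangentHeight x s h) (i : ℤ) :
    om (deriv x (σ i)) (x (σ (i + 1)) - x (σ (i - 1))) = 0 := by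
  have hmem : σ i ∈ Set.Ioo (σ (i - 1)) (σ (i + 1)) :=
    ⟨hσ.strictMono (by omega), hσ.strictMono (by omega)⟩
  have hmax : IsLocalMax (fun t => doubleArea (x (σ (i - 1))) (x t) (x (σ (i + 1)))) (σ i) := by
    filter_upwards [Ioo_mem_nhds hmem.1 hmem.2] with t ht
    have hle := hbest (insert (x t) ((Finset.Ioo i (i + n)).image fun j => x (σ j))) ?_ ?_
    · rw [Finset.coe_insert, Finset.coe_image, Finset.coe_Ioo,
        hσ.range_eq_insert_image_Ioo (by omega) hper i,
        hσ.volume_real_convexHull_insert_image_Ioo hn hx hper hpos ht,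
        hσ.volume_real_convexHull_insert_image_Ioo hn hx hper hpos hmem] at hle
      linarith
    · rw [Finset.coe_insert, Finset.coe_image]
      exact Set.insert_subset ⟨t, rfl⟩ (Set.image_subset_iff.2 fun j _ => ⟨σ j, rfl⟩)
    · have hcard : (Finset.Ioo i (i + n)).card = n - 1 := by
        rw [Int.card_Ioo]
        omega
      have := Finset.card_insert_le (x t) ((Finset.Ioo i (i + n)).image fun j => x (σ j))
      have := (Finset.Ioo i (i + n)).card_image_le (f := fun j => x (σ j))
      omega
  have hcrit := hmax.hasDerivAt_eq_zero
    (hasDerivAt_om ((hx (σ i)).hasDerivAt.sub_const _) (hasDerivAt_const _ _))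
  simpa [om] using hcrit

lemma tangentHeight_eq (hσ : IsCyclicPartition lam n σ) (hbest : IsBestInscribed x n σ)
    (hn : 3 ≤ n) (hx : Differentiable ℝ x) (hper : Function.Periodic x lam)
    (hpos : ∀ s h, 0 < h → h < lam → 0 < tangentHeight x s h) (i : ℤ) :
    tangentHeight x (σ i) (σ (i + 1) - σ i) = tangentHeight x (σ i) (-(σ i - σ (i - 1))) := by
  rw [← sub_eq_zero, tangentHeight_sub_tangentHeight, add_sub_cancel, neg_sub, add_sub_cancel]
  exact hσ.om_deriv_chord_eq_zero hbest hn hx hper hpos i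

end IsCyclicPartition

end InscribedPolygon

section LargestGap

variable {x : ℝ → ℝ × ℝ} {lam : ℝ} {σ : ℤ → ℝ} {n : ℕ}

lemma le_two_mul_of_forall_le_add {g : ℕ → ℝ} {δ η : ℝ} (h0 : g 0 ≤ δ) (hη : 0 ≤ η)
    (hstep : ∀ m, g m ≤ 2 * δ → g (m + 1) ≤ g m + η) (hn : n * η ≤ δ) {m : ℕ} (hm : m ≤ n) :
    g m ≤ 2 * δ := by
  have hbound : ∀ m : ℕ, m ≤ n → δ + m * η ≤ 2 * δ := fun m hm => by
    have : (m : ℝ) * η ≤ n * η := by gcongr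
    linarith
  have hlin : g m ≤ δ + m * η := by
    induction m with
    | zero => simpa using h0
    | succ m ih =>
      have ih := ih (by omega)
      have := hstep m (ih.trans (hbound m (by omega)))
      push_cast
      linarith
  exact hlin.trans (hbound m hm)

namespace IsCyclicPartition

lemma gap_pos (hσ : IsCyclicPartition lam n σ) (i : ℤ) : 0 < σ i - σ (i - 1) :=
  sub_pos.2 (hσ.strictMono (by omega))

lemma periodic_gap (hσ : IsCyclicPartition lam n σ) :
    Function.Periodic (fun i => σ i - σ (i - 1)) (n : ℤ) := fun i => by
  simp only [show i + (n : ℤ) - 1 = i - 1 + n by ring, hσ.add_period, add_sub_add_right_eq_sub]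

lemma exists_gap_le (hσ : IsCyclicPartition lam n σ) (hn : 0 < n) :
    ∃ i, σ i - σ (i - 1) ≤ lam / n := by
  have hn' : (n : ℝ) ≠ 0 := by positivity
  have hsum : ∑ j ∈ Finset.range n, (σ ((j + 1 : ℕ) : ℤ) - σ j) ≤
      ∑ _j ∈ Finset.range n, lam / n := by
    rw [Finset.sum_range_sub fun j : ℕ => σ j, Finset.sum_const, Finset.card_range, nsmul_eq_mul,
      mul_div_cancel₀ _ hn', ← zero_add (n : ℤ), hσ.add_period]
    simp
  obtain ⟨j, -, hj⟩ := Finset.exists_le_of_sum_le (Finset.nonempty_range_iff.2 hn.ne') hsum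
  exact ⟨(j + 1 : ℕ), by simpa using hj⟩

lemma gap_le_two_mul (hσ : IsCyclicPartition lam n σ) (hn : 0 < n) {η : ℝ} (hη : 0 ≤ η)
    (hnη : n * η ≤ lam / n)
    (hstep : ∀ i, σ i - σ (i - 1) ≤ 2 * (lam / n) →
      σ (i + 1) - σ i ≤ σ i - σ (i - 1) + η) (i : ℤ) :
    σ i - σ (i - 1) ≤ 2 * (lam / n) := by
  obtain ⟨i₀, hi₀⟩ := hσ.exists_gap_le hn
  obtain ⟨j, hj, hij⟩ := hσ.periodic_gap.exists_mem_Ico (by exact_mod_cast hn) i i₀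
  have hle := le_two_mul_of_forall_le_add (g := fun m => σ (i₀ + m) - σ (i₀ + m - 1)) (n := n)
    (by simpa using hi₀) hη (fun m hm => ?_) hnη (m := (j - i₀).toNat)
    (by have := hj.1; have := hj.2; omega)
  · rw [Int.toNat_of_nonneg (sub_nonneg.2 hj.1), add_sub_cancel] at hle
    exact hij.trans_le hle
  · rw [Nat.cast_succ, ← add_assoc, add_sub_cancel_right]
    exact hstep _ hm

end IsCyclicPartition

end LargestGap

section BestInscribed

variable {x : ℝ → ℝ × ℝ} {lam : ℝ}

namespace IsAffineArcLength

lemma exists_gap_step (haff : IsAffineArcLength x) (hlam : 0 < lam) (hx : ContDiff ℝ 6 x)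
    (hper : Function.Periodic x lam) (hpos : ∀ s h, 0 < h → h < lam → 0 < tangentHeight x s h)
    {ε : ℝ} (hε : 0 < ε) :
    ∃ r > 0, ∀ (n : ℕ) (σ : ℤ → ℝ), 3 ≤ n → IsCyclicPartition lam n σ → IsBestInscribed x n σ →
      ∀ i, σ i - σ (i - 1) ≤ r →
        |σ (i + 1) - σ i - (σ i - σ (i - 1)) -
          1 / 30 * deriv (affineCurvature x) (σ i) * (σ i - σ (i - 1)) ^ 4| ≤
            ε * (σ i - σ (i - 1)) ^ 5 := by
  obtain ⟨r, hr, h⟩ := haff.exists_abs_gap_sub_le hlam hx hper hpos hε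
  refine ⟨r, hr, fun n σ hn hσ hbest i hi => h _ _ _ (hσ.gap_pos i) hi
    (sub_pos.2 (hσ.strictMono (lt_add_one i))) ?_
    (hσ.tangentHeight_eq hbest hn (hx.differentiable (by norm_num)) hper hpos i)⟩
  linarith [hσ.apply_add_one_lt hn i]

lemma exists_gap_growth (haff : IsAffineArcLength x) (hlam : 0 < lam) (hx : ContDiff ℝ 6 x)
    (hper : Function.Periodic x lam) (hpos : ∀ s h, 0 < h → h < lam → 0 < tangentHeight x s h) :
    ∃ r > 0, ∃ K > 0, ∀ (n : ℕ) (σ : ℤ → ℝ), 3 ≤ n → IsCyclicPartition lam n σ →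
      IsBestInscribed x n σ → ∀ i, σ i - σ (i - 1) ≤ r →
        σ (i + 1) - σ i ≤ σ i - σ (i - 1) + K * (σ i - σ (i - 1)) ^ 4 := by
  obtain ⟨r, hr, h⟩ := haff.exists_gap_step hlam hx hper hpos one_pos
  obtain ⟨K, hK, hKx⟩ :=
    exists_abs_deriv_affineCurvature_le hlam.ne' (hx.of_le (by norm_num)) hper
  refine ⟨min r 1, by positivity, K + 1, by positivity, fun n σ hn hσ hbest i hi => ?_⟩
  have hstep := (abs_le.1 (h n σ hn hσ hbest i (hi.trans (min_le_left r 1)))).2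
  have ha := hσ.gap_pos i
  set a := σ i - σ (i - 1)
  have hcurv : 1 / 30 * deriv (affineCurvature x) (σ i) * a ^ 4 ≤ K * a ^ 4 := by
    gcongr
    linarith [(le_abs_self _).trans (hKx (σ i))]
  have hpow : a ^ 5 ≤ a ^ 4 :=
    pow_le_pow_of_le_one ha.le (hi.trans (min_le_right r 1)) (by norm_num)
  linarith

lemma exists_forall_gap_le (haff : IsAffineArcLength x) (hlam : 0 < lam) (hx : ContDiff ℝ 6 x)
    (hper : Function.Periodic x lam) (hpos : ∀ s h, 0 < h → h < lam → 0 < tangentHeight x s h)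
    {ρ : ℝ} (hρ : 0 < ρ) :
    ∃ N : ℕ, ∀ (n : ℕ) (σ : ℤ → ℝ), N ≤ n → 3 ≤ n → IsCyclicPartition lam n σ →
      IsBestInscribed x n σ → ∀ i, σ i - σ (i - 1) ≤ ρ := by
  obtain ⟨r, hr, K, hK, hgrowth⟩ := haff.exists_gap_growth hlam hx hper hpos
  have hδ : Tendsto (fun n : ℕ => lam / n) atTop (𝓝 0) := tendsto_const_div_atTop_nhds_zero_nat lam
  have hc : 0 < min (min (r / 2) (ρ / 2)) (min 1 (1 / (16 * K * lam))) := by positivity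
  obtain ⟨N, hN⟩ := eventually_atTop.1 (hδ.eventually_le_const hc)
  refine ⟨N, fun n σ hNn hn hσ hbest i => ?_⟩
  have hsmall := hN n hNn
  have hnδ : n * (lam / n) = lam := mul_div_cancel₀ _ (by positivity)
  have hδ₀ : 0 < lam / n := by positivity
  simp only [le_min_iff] at hsmall
  set δ := lam / n
  obtain ⟨⟨hδr, hδρ⟩, hδ₁, hδK⟩ := hsmall
  rw [le_div_iff₀ (by positivity)] at hδK
  have hη : n * (K * (2 * δ) ^ 4) ≤ δ :=
    calc n * (K * (2 * δ) ^ 4) = δ * (16 * K * (n * δ)) * δ ^ 2 := by ring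
      _ ≤ 1 * δ := by rw [hnδ]; gcongr; nlinarith
      _ = δ := one_mul δ
  have hgap := hσ.gap_le_two_mul (by omega) (by positivity) hη (fun j hj => ?_) i
  · linarith
  · refine (hgrowth n σ hn hσ hbest j (by linarith)).trans ?_
    have := (hσ.gap_pos j).le
    gcongr

theorem exists_forall_abs_gap_sub_le (haff : IsAffineArcLength x) (hlam : 0 < lam)
    (hx : ContDiff ℝ 6 x) (hper : Function.Periodic x lam)
    (hpos : ∀ s h, 0 < h → h < lam → 0 < tangentHeight x s h) {ε : ℝ} (hε : 0 < ε) :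
    ∃ N : ℕ, ∀ (n : ℕ) (σ : ℤ → ℝ), N ≤ n → 3 ≤ n → IsCyclicPartition lam n σ →
      IsBestInscribed x n σ → ∀ i,
        |σ (i + 1) - σ i - (σ i - σ (i - 1)) -
          1 / 30 * deriv (affineCurvature x) (σ i) * (σ i - σ (i - 1)) ^ 4| ≤
            ε * (σ i - σ (i - 1)) ^ 5 := by
  obtain ⟨r, hr, hstep⟩ := haff.exists_gap_step hlam hx hper hpos hε
  obtain ⟨N, hN⟩ := haff.exists_forall_gap_le hlam hx hper hpos hr
  exact ⟨N, fun n σ hNn hn hσ hbest i => hstep n σ hn hσ hbest i (hN n σ hNn hn hσ hbest i)⟩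

end IsAffineArcLength

end BestInscribed

section Statement

variable {x : ℝ → ℝ × ℝ} {lam : ℝ} {σ : ℤ → ℝ} {n : ℕ}

lemma IsCyclicPartition.of_forall_lt (hn : 0 < n) (hadd : ∀ i, σ (i + n) = σ i + lam)
    (hmono : ∀ i, 1 ≤ i → i < (n : ℤ) → σ i < σ (i + 1)) (hlast : σ n < σ 1 + lam) :
    IsCyclicPartition lam n σ := by
  refine ⟨strictMono_int_of_lt_succ fun i => ?_, hadd⟩
  have hper : Function.Periodic (fun i => σ (i + 1) - σ i) (n : ℤ) := fun i => by
    simp only [add_right_comm i (n : ℤ) 1, hadd, add_sub_add_right_eq_sub]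
  obtain ⟨j, hj, hij⟩ := hper.exists_mem_Ico (by exact_mod_cast hn) i 1
  refine sub_pos.1 (hij.symm ▸ sub_pos.2 ?_)
  rcases (Int.lt_add_one_iff.1 (add_comm 1 (n : ℤ) ▸ hj.2)).eq_or_lt with rfl | hjn
  · rwa [add_comm, hadd]
  · exact hmono j hj.1 hjn

lemma IsBestInscribed.of_eq_sSup (hσ : IsCyclicPartition lam n σ) (hn : 0 < n)
    (hper : Function.Periodic x lam) {C : Set (ℝ × ℝ)} (hcomp : IsCompact C) (hconv : Convex ℝ C)
    (hxC : ∀ t, x t ∈ frontier C)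
    (hbest : volume.real (convexHull ℝ
        (((Finset.Icc (1 : ℤ) n).image fun i => x (σ i) : Finset (ℝ × ℝ)) : Set (ℝ × ℝ))) =
      sSup {A : ℝ | ∃ S : Finset (ℝ × ℝ), ↑S ⊆ frontier C ∧ S.card ≤ n ∧
        A = volume.real (convexHull ℝ (S : Set (ℝ × ℝ)))}) :
    IsBestInscribed x n σ := by
  intro S hS hcard
  have hrange : (Set.range fun i => x (σ i)) = (fun i => x (σ i)) '' Set.Icc (1 : ℤ) n := by
    rw [← (hσ.periodic_comp hper).image_Ioc (by exact_mod_cast hn) 0, zero_add]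
    rfl
  rw [hrange, ← Finset.coe_Icc, ← Finset.coe_image, hbest]
  refine le_csSup ⟨volume.real C, ?_⟩
    ⟨S, hS.trans (Set.range_subset_iff.2 hxC), hcard, rfl⟩
  rintro _ ⟨S, hS, -, rfl⟩
  exact measureReal_mono (convexHull_min (hS.trans hcomp.isClosed.frontier_subset) hconv)
    hcomp.measure_lt_top.ne

end Statement

theorem stmt_5_general (x : ℝ → ℝ × ℝ) (lam : ℝ) (hlam : 0 < lam)
    (hx : ContDiff ℝ 6 x)
    (haff : ∀ t : ℝ, om (deriv x t) (iteratedDeriv 2 x t) = 1)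
    (hper : ∀ t : ℝ, x (t + lam) = x t)
    (hinj : Set.InjOn x (Set.Ico 0 lam))
    (C : Set (ℝ × ℝ)) (hcomp : IsCompact C) (hconv : StrictConvex ℝ C)
    (hbd : x '' Set.Icc 0 lam = frontier C)
    (k : ℝ → ℝ) (hk : ∀ t : ℝ, k t = om (iteratedDeriv 2 x t) (iteratedDeriv 3 x t))
    (s : ℕ → ℤ → ℝ)
    (hs0 : ∀ n : ℕ, 3 ≤ n → 0 ≤ s n 1)
    (hmono : ∀ n : ℕ, 3 ≤ n → ∀ i : ℤ, 1 ≤ i → i < (n : ℤ) → s n i < s n (i + 1))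
    (hlast : ∀ n : ℕ, 3 ≤ n → s n (n : ℤ) < lam)
    (hcyc : ∀ n : ℕ, 3 ≤ n → ∀ i : ℤ, s n (i + (n : ℤ)) = s n i + lam)
    (hbest : ∀ n : ℕ, 3 ≤ n →
      (volume (convexHull ℝ
        (((Finset.Icc (1 : ℤ) (n : ℤ)).image fun i => x (s n i) : Finset (ℝ × ℝ)) :
          Set (ℝ × ℝ)))).toReal =
      sSup { A : ℝ | ∃ S : Finset (ℝ × ℝ), ↑S ⊆ frontier C ∧ S.card ≤ n ∧
        A = (volume (convexHull ℝ (S : Set (ℝ × ℝ)))).toReal })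
    (lamn : ℕ → ℤ → ℝ) (hlamn : ∀ n : ℕ, ∀ i : ℤ, lamn n i = s n i - s n (i - 1)) :
    ∀ ε > (0 : ℝ), ∃ N : ℕ, ∀ n : ℕ, N ≤ n → ∀ i : ℤ,
      |lamn n (i + 1) - lamn n i - (1 / 30) * deriv k (s n i) * (lamn n i) ^ 4| ≤
        ε * (lamn n i) ^ 5 := by
  intro ε hε
  obtain rfl : k = affineCurvature x := funext hk
  have hxC (t : ℝ) : x t ∈ frontier C := by
    obtain ⟨u, hu, hxu⟩ := Function.Periodic.exists_mem_Ico₀ hper hlam t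
    exact hbd ▸ ⟨u, Set.Ico_subset_Icc_self hu, hxu.symm⟩
  have hpos := IsAffineArcLength.tangentHeight_pos haff (hx.of_le (by norm_num)) hper hinj hconv
    hcomp.isClosed hxC
  obtain ⟨N, hN⟩ := IsAffineArcLength.exists_forall_abs_gap_sub_le haff hlam hx hper
    (fun s h => hpos s) hε
  refine ⟨max N 3, fun n hn i => ?_⟩
  obtain ⟨hNn, hn₃⟩ := max_le_iff.1 hn
  have hσ : IsCyclicPartition lam n (s n) := .of_forall_lt (by omega) (hcyc n hn₃) (hmono n hn₃)
    (by linarith [hs0 n hn₃, hlast n hn₃])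
  have hbest' : IsBestInscribed x n (s n) :=
    .of_eq_sSup hσ (by omega) hper hcomp hconv.convex hxC (hbest n hn₃)
  simpa only [hlamn, add_sub_cancel_right] using hN n (s n) hNn hn₃ hσ hbest' i

theorem stmt_5 (x : ℝ → ℝ × ℝ) (lam : ℝ) (hlam : 0 < lam)
    (hx : ContDiff ℝ (⊤ : ℕ∞) x)
    (haff : ∀ t : ℝ, om (deriv x t) (iteratedDeriv 2 x t) = 1)
    (hper : ∀ t : ℝ, x (t + lam) = x t)
    (hinj : Set.InjOn x (Set.Ico 0 lam))
    (C : Set (ℝ × ℝ)) (hC : C = convexHull ℝ (x '' Set.Icc 0 lam))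
    (hcomp : IsCompact C) (hconv : StrictConvex ℝ C)
    (hbd : x '' Set.Icc 0 lam = frontier C)
    (k : ℝ → ℝ) (hk : ∀ t : ℝ, k t = om (iteratedDeriv 2 x t) (iteratedDeriv 3 x t))
    -- the vertex parameters of best approximating inscribed polygons
    (s : ℕ → ℤ → ℝ)
    (hs0 : ∀ n : ℕ, 3 ≤ n → 0 ≤ s n 1)
    (hmono : ∀ n : ℕ, 3 ≤ n → ∀ i : ℤ, 1 ≤ i → i < (n : ℤ) → s n i < s n (i + 1))
    (hlast : ∀ n : ℕ, 3 ≤ n → s n (n : ℤ) < lam)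
    (hcyc : ∀ n : ℕ, 3 ≤ n → ∀ i : ℤ, s n (i + (n : ℤ)) = s n i + lam)
    (hbest : ∀ n : ℕ, 3 ≤ n →
      (volume (convexHull ℝ
        (((Finset.Icc (1 : ℤ) (n : ℤ)).image fun i => x (s n i) : Finset (ℝ × ℝ)) :
          Set (ℝ × ℝ)))).toReal =
      sSup { A : ℝ | ∃ S : Finset (ℝ × ℝ), ↑S ⊆ frontier C ∧ S.card ≤ n ∧
        A = (volume (convexHull ℝ (S : Set (ℝ × ℝ)))).toReal })
    -- the arc lengths λ_{n,i}
    (lamn : ℕ → ℤ → ℝ) (hlamn : ∀ n : ℕ, ∀ i : ℤ, lamn n i = s n i - s n (i - 1)) :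
    -- conclusion: λ_{n,i+1} = λ_{n,i} + (1/30) k'(s_{n,i}) λ_{n,i}⁴ + ε₁(n,i) with
    -- max_{1 ≤ i ≤ n} |ε₁(n,i)| / λ_{n,i}⁵ → 0 as n → ∞
    ∀ ε > (0 : ℝ), ∃ N : ℕ, ∀ n : ℕ, N ≤ n → ∀ i : ℤ, 1 ≤ i → i ≤ (n : ℤ) →
      |lamn n (i + 1) - lamn n i - (1 / 30) * deriv k (s n i) * (lamn n i) ^ 4| ≤
        ε * (lamn n i) ^ 5 := by
  intro ε hε
  obtain ⟨N, hN⟩ := stmt_5_general x lam hlam (mod_cast contDiff_infty.1 hx 6) haff hper hinj C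
    hcomp hconv hbd k hk s hs0 hmono hlast hcyc hbest lamn hlamn ε hε
  exact ⟨N, fun n hn i _ _ => hN n hn i⟩
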